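/- Let G be a finite abelian group and A, B, C ⊆ G nonempty sets with (A + B) ∩ C = ∅. Let H = {x ∈ G : A + B + x = A + B} be the stabilizer of A + B. Then |C| ≤ |G| − |A| − |B| + |H|. -/

import Mathlib

open scoped Pointwise

/-- `C` is periodic under a subgroup `H` with `n ≤ |C| + |H|`. -/
def KGood {G : Type*} [AddCommGroup G] (n : ℕ) (C : Finset G) : Prop :=
  ∃ H : AddSubgroup G, (∀ c ∈ C, ∀ h ∈ H, c + h ∈ C) ∧ n ≤ C.card + Nat.card H

theorem kn_grid {G : Type*} [AddCommGroup G] [Fintype G] [DecidableEq G]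
    (H1 H2 : AddSubgroup G) (S T D : Finset G) (c : G)
    (hS : ∀ x ∈ S, x ∈ H1) (hT : ∀ x ∈ T, x ∈ H2)
    (hSK : ∀ x ∈ S, ∀ k ∈ H1 ⊓ H2, x + k ∈ S) (hTK : ∀ x ∈ T, ∀ k ∈ H1 ⊓ H2, x + k ∈ T)
    (hSn : S.Nonempty) (hTn : T.Nonempty)
    (hD : ∀ s ∈ S, ∀ t ∈ T, c + s + t ∈ D) :
    S.card + T.card ≤ D.card + Nat.card (H1 ⊓ H2 : AddSubgroup G) := by
  classical
  set K : Finset G := Finset.univ.filter (fun x => x ∈ H1 ⊓ H2) with hK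
  have hKc : Nat.card (H1 ⊓ H2 : AddSubgroup G) = K.card := by
    rw [hK, Nat.card_eq_fintype_card, Fintype.card_subtype]
  rw [hKc]
  have big : ∀ X : Finset G, X.Nonempty → (∀ x ∈ X, ∀ k ∈ H1 ⊓ H2, x + k ∈ X) →
      K.card ≤ X.card := by
    rintro X ⟨x, hx⟩ h
    refine Finset.card_le_card_of_injOn (fun k => x + k) ?_ ?_
    · intro k hk
      exact h x hx k (by simpa [hK] using hk)
    · intro a _ b _ hab
      exact add_left_cancel hab
  have h1 := big S hSn hSK
  have h2 := big T hTn hTK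
  have h3 : (S ×ˢ T).card ≤ K.card * D.card := by
    refine Finset.card_le_mul_card_image_of_maps_to (f := fun p : G × G => c + p.1 + p.2) ?_ _ ?_
    · intro p hp
      have hp := Finset.mem_product.1 hp
      exact hD _ hp.1 _ hp.2
    · intro d _
      rcases Finset.eq_empty_or_nonempty
        ((S ×ˢ T).filter (fun p : G × G => c + p.1 + p.2 = d)) with he | ⟨⟨s, t⟩, hst⟩
      · rw [he]; simp
      · simp only [Finset.mem_filter, Finset.mem_product] at hst
        obtain ⟨⟨hs, ht⟩, hd⟩ := hst
        refine Finset.card_le_card_of_injOn (fun p => p.1 - s) ?_ ?_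
        · rintro ⟨a, b⟩ hp
          simp only [Finset.coe_filter, Finset.mem_product, Set.mem_ofPred_eq] at hp
          obtain ⟨⟨ha, hb⟩, hd'⟩ := hp
          have e : a - s = t - b := by
            have : c + a + b = c + s + t := hd'.trans hd.symm
            have h5 : a + b = s + t := by
              rw [add_assoc, add_assoc] at this
              exact add_left_cancel this
            rw [sub_eq_sub_iff_add_eq_add, h5, add_comm]
          simp only [hK, Finset.coe_filter, Finset.mem_univ, true_and, Set.mem_ofPred_eq,
            AddSubgroup.mem_inf]
          exact ⟨H1.sub_mem (hS _ ha) (hS _ hs), e ▸ H2.sub_mem (hT _ ht) (hT _ hb)⟩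
        · rintro ⟨a, b⟩ hp ⟨a', b'⟩ hp' h
          simp only [Finset.coe_filter, Finset.mem_product, Set.mem_ofPred_eq] at hp hp' h
          have ha : a = a' := sub_left_injective h
          subst ha
          have := hp.2.trans hp'.2.symm
          rw [add_left_cancel this]
  rw [Finset.card_product] at h3
  have hKpos : 0 < K.card := Finset.card_pos.2 ⟨0, by simp [hK, zero_mem]⟩
  obtain ⟨u, hu⟩ := Nat.exists_eq_add_of_le h1
  obtain ⟨v, hv⟩ := Nat.exists_eq_add_of_le h2
  rw [hu, hv] at h3 ⊢
  refine Nat.le_of_mul_le_mul_left ?_ hKpos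
  nlinarith [Nat.zero_le (u * v)]

theorem kn_aux {G : Type*} [AddCommGroup G] [Fintype G] [DecidableEq G] (n : ℕ)
    (C1 C2 : Finset G) (H1 H2 : AddSubgroup G)
    (p1 : ∀ c ∈ C1, ∀ h ∈ H1, c + h ∈ C1) (n1 : n ≤ C1.card + Nat.card H1)
    (p2 : ∀ c ∈ C2, ∀ h ∈ H2, c + h ∈ C2) (n2 : n ≤ C2.card + Nat.card H2)
    (hle : Nat.card H1 ≤ Nat.card H2) (hne : ¬ C2 ⊆ C1) :
    KGood n (C1 ∪ C2) := by
  classical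
  refine ⟨H1 ⊓ H2, ?_, ?_⟩
  · intro c hc h hh
    rw [AddSubgroup.mem_inf] at hh
    rcases Finset.mem_union.1 hc with hc | hc
    · exact Finset.mem_union_left _ (p1 c hc h hh.1)
    · exact Finset.mem_union_right _ (p2 c hc h hh.2)
  have q1 : ∀ c, ∀ h ∈ H1, (c + h ∈ C1 ↔ c ∈ C1) := fun c h hh =>
    ⟨fun hc => by simpa using p1 _ hc _ (H1.neg_mem hh), fun hc => p1 _ hc _ hh⟩
  have q2 : ∀ c, ∀ h ∈ H2, (c + h ∈ C2 ↔ c ∈ C2) := fun c h hh =>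
    ⟨fun hc => by simpa using p2 _ hc _ (H2.neg_mem hh), fun hc => p2 _ hc _ hh⟩
  obtain ⟨c, hc2, hc1⟩ := Finset.not_subset.1 hne
  set F1 : Finset G := Finset.univ.filter (fun x => x ∈ H1) with hF1
  set F2 : Finset G := Finset.univ.filter (fun x => x ∈ H2) with hF2
  have e1 : Nat.card H1 = F1.card := by
    rw [hF1, Nat.card_eq_fintype_card, Fintype.card_subtype]
  have e2 : Nat.card H2 = F2.card := by
    rw [hF2, Nat.card_eq_fintype_card, Fintype.card_subtype]
  set S := F1.filter (fun x => c + x ∈ C2) with hS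
  set P := F1.filter (fun x => ¬ c + x ∈ C2) with hP
  set U := F2.filter (fun x => c + x ∈ C1) with hU
  set T := F2.filter (fun x => ¬ c + x ∈ C1) with hT
  have s1 : S.card + P.card = F1.card := Finset.card_filter_add_card_filter_not _
  have s2 : U.card + T.card = F2.card := Finset.card_filter_add_card_filter_not _
  have d1 : (C2 \ C1).card + C1.card = (C1 ∪ C2).card := by
    rw [Finset.union_comm, Finset.card_sdiff_add_card]
  have d2 : (C1 \ C2).card + C2.card = (C1 ∪ C2).card := by
    rw [Finset.card_sdiff_add_card]
  have mS : ∀ x, x ∈ S ↔ x ∈ H1 ∧ c + x ∈ C2 := by simp [hS, hF1]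
  have mP : ∀ x, x ∈ P ↔ x ∈ H1 ∧ ¬ c + x ∈ C2 := by simp [hP, hF1]
  have mU : ∀ x, x ∈ U ↔ x ∈ H2 ∧ c + x ∈ C1 := by simp [hU, hF2]
  have mT : ∀ x, x ∈ T ↔ x ∈ H2 ∧ ¬ c + x ∈ C1 := by simp [hT, hF2]
  clear_value S P U T F1 F2
  by_cases hPT : P.card ≤ T.card
  · have := kn_grid H1 H2 S T (C2 \ C1) c (fun x hx => ((mS x).1 hx).1)
      (fun x hx => ((mT x).1 hx).1) ?_ ?_ ⟨0, by simp [mS, hc2, zero_mem]⟩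
      ⟨0, by simp [mT, hc1, zero_mem]⟩ ?_
    · omega
    · intro x hx k hk
      rw [AddSubgroup.mem_inf] at hk
      rw [mS] at hx ⊢
      rw [← add_assoc, q2 _ _ hk.2]
      exact ⟨H1.add_mem hx.1 hk.1, hx.2⟩
    · intro x hx k hk
      rw [AddSubgroup.mem_inf] at hk
      rw [mT] at hx ⊢
      rw [← add_assoc, q1 _ _ hk.1]
      exact ⟨H2.add_mem hx.1 hk.2, hx.2⟩
    · intro s hs t ht
      rw [mS] at hs
      rw [mT] at ht
      rw [Finset.mem_sdiff, q2 _ _ ht.1, add_right_comm, q1 _ _ hs.1]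
      exact ⟨hs.2, ht.2⟩
  · have := kn_grid H1 H2 P U (C1 \ C2) c (fun x hx => ((mP x).1 hx).1)
      (fun x hx => ((mU x).1 hx).1) ?_ ?_ (Finset.card_pos.1 (by omega))
      (Finset.card_pos.1 (by omega)) ?_
    · omega
    · intro x hx k hk
      rw [AddSubgroup.mem_inf] at hk
      rw [mP] at hx ⊢
      rw [← add_assoc, q2 _ _ hk.2]
      exact ⟨H1.add_mem hx.1 hk.1, hx.2⟩
    · intro x hx k hk
      rw [AddSubgroup.mem_inf] at hk
      rw [mU] at hx ⊢
      rw [← add_assoc, q1 _ _ hk.1]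
      exact ⟨H2.add_mem hx.1 hk.2, hx.2⟩
    · intro s hs t ht
      rw [mP] at hs
      rw [mU] at ht
      rw [Finset.mem_sdiff, q2 _ _ ht.1, add_right_comm, q1 _ _ hs.1]
      exact ⟨ht.2, hs.2⟩

theorem kn_union {G : Type*} [AddCommGroup G] [Fintype G] [DecidableEq G] (n : ℕ)
    (C1 C2 : Finset G) (h1 : KGood n C1) (h2 : KGood n C2) : KGood n (C1 ∪ C2) := by
  by_cases a : C2 ⊆ C1
  · rwa [Finset.union_eq_left.2 a]
  by_cases b : C1 ⊆ C2
  · rwa [Finset.union_eq_right.2 b]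
  obtain ⟨H1, p1, n1⟩ := h1
  obtain ⟨H2, p2, n2⟩ := h2
  rcases le_total (Nat.card H1) (Nat.card H2) with h | h
  · exact kn_aux n C1 C2 H1 H2 p1 n1 p2 n2 h a
  · rw [Finset.union_comm]
    exact kn_aux n C2 C1 H2 H1 p2 n2 p1 n1 h b

/-- Local version with `0 ∈ B`, by repeated e-transforms. -/
theorem kn_local {G : Type*} [AddCommGroup G] [Fintype G] [DecidableEq G] (m : ℕ) :
    ∀ (A B : Finset G) (a : G), B.card = m → a ∈ A → (0 : G) ∈ B →
      ∃ C ⊆ A + B, a ∈ C ∧ KGood (A.card + B.card) C := by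
  induction m using Nat.strong_induction_on with
  | _ m ih =>
    intro A B a hm ha hB
    by_cases hall : ∀ e ∈ A, ∀ b ∈ B, e + b ∈ A
    · refine ⟨A, fun x hx => by simpa using Finset.add_mem_add hx hB, ha,
        AddAction.stabilizer G A, ?_, ?_⟩
      · intro c hc h hh
        rw [AddAction.mem_stabilizer_iff] at hh
        rw [← hh, add_comm]
        exact Finset.vadd_mem_vadd_finset hc
      · have : B.card ≤ Nat.card (AddAction.stabilizer G A) := by
          classical
          rw [Nat.card_eq_fintype_card, Fintype.card_subtype]
          refine Finset.card_le_card ?_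
          intro b hb
          refine Finset.mem_filter.2 ⟨Finset.mem_univ _, ?_⟩
          refine AddAction.mem_stabilizer_iff.2 ?_
          refine Finset.eq_of_subset_of_card_le ?_ (by simp)
          intro x hx
          obtain ⟨y, hy, rfl⟩ := Finset.mem_vadd_finset.1 hx
          rw [vadd_eq_add, add_comm]
          exact hall y hy b hb
        omega
    · push Not at hall
      obtain ⟨e, he, b, hb, heb⟩ := hall
      set B' := B.filter (fun x => e + x ∈ A) with hB'
      set N := B.filter (fun x => ¬ e + x ∈ A) with hN
      set A' := A ∪ N.image (fun x => e + x) with hA'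
      have s : B'.card + N.card = B.card := Finset.card_filter_add_card_filter_not _
      have hNpos : 0 < N.card := Finset.card_pos.2 ⟨b, by simp [hN, hb, heb]⟩
      have cA : A'.card = A.card + N.card := by
        rw [hA', Finset.card_union_of_disjoint,
          Finset.card_image_of_injective _ (add_right_injective e)]
        rw [Finset.disjoint_left]
        intro x hx hx'
        obtain ⟨y, hy, rfl⟩ := Finset.mem_image.1 hx'
        exact (Finset.mem_filter.1 hy).2 hx
      obtain ⟨C, hC, haC, hg⟩ := ih B'.card (by omega) A' B' a rfl
        (Finset.mem_union_left _ ha) (by simp [hB', hB, he])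
      refine ⟨C, hC.trans ?_, haC, ?_⟩
      · intro z hz
        obtain ⟨x, hx, y, hy, rfl⟩ := Finset.mem_add.1 hz
        obtain ⟨hyB, hyA⟩ := Finset.mem_filter.1 hy
        rcases Finset.mem_union.1 hx with hx | hx
        · exact Finset.add_mem_add hx hyB
        · obtain ⟨w, hw, rfl⟩ := Finset.mem_image.1 hx
          rw [add_right_comm]
          exact Finset.add_mem_add hyA (Finset.mem_filter.1 hw).1
      · have : A.card + B.card = A'.card + B'.card := by omega
        rwa [this]

theorem kn_local' {G : Type*} [AddCommGroup G] [Fintype G] [DecidableEq G]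
    (A B : Finset G) (c : G) (hc : c ∈ A + B) :
      ∃ C ⊆ A + B, c ∈ C ∧ KGood (A.card + B.card) C := by
  obtain ⟨a, ha, b, hb, rfl⟩ := Finset.mem_add.1 hc
  obtain ⟨C, hC, haC, hg⟩ := kn_local _ (A.image (· + b)) (B.image (· - b)) (a + b) rfl
    (Finset.mem_image_of_mem _ ha) (Finset.mem_image.2 ⟨b, hb, sub_self b⟩)
  rw [Finset.card_image_of_injective _ (add_left_injective b),
    Finset.card_image_of_injective _ sub_left_injective] at hg
  refine ⟨C, hC.trans ?_, haC, hg⟩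
  intro z hz
  obtain ⟨x, hx, y, hy, rfl⟩ := Finset.mem_add.1 hz
  obtain ⟨x, hxA, rfl⟩ := Finset.mem_image.1 hx
  obtain ⟨y, hyB, rfl⟩ := Finset.mem_image.1 hy
  have : x + b + (y - b) = x + y := by abel
  rw [this]
  exact Finset.add_mem_add hxA hyB

theorem kneser_weak {G : Type*} [AddCommGroup G] [Fintype G] [DecidableEq G]
    (A B : Finset G) (hA : A.Nonempty) (hB : B.Nonempty) :
    KGood (A.card + B.card) (A + B) := by
  classical
  obtain ⟨c, hc⟩ := hA.add hB
  obtain ⟨C, hC, -, hg⟩ := kn_local' A B c hc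
  obtain ⟨D, hD, hmax⟩ := Finset.exists_max_image
    ((A + B).powerset.filter (fun D => KGood (A.card + B.card) D)) Finset.card
    ⟨C, by simp [hC, hg]⟩
  simp only [Finset.mem_filter, Finset.mem_powerset] at hD hmax
  have : A + B ⊆ D := by
    intro x hx
    obtain ⟨E, hE, hxE, hgE⟩ := kn_local' A B x hx
    have h := hmax (D ∪ E) ⟨Finset.union_subset hD.1 hE, kn_union _ _ _ hD.2 hgE⟩
    rw [Finset.eq_of_subset_of_card_le Finset.subset_union_left h]
    exact Finset.mem_union_right _ hxE
  rw [this.antisymm hD.1]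
  exact hD.2

theorem stmt3 {G : Type*} [AddCommGroup G] [Fintype G] [DecidableEq G]
    (A B C : Finset G) (hA : A.Nonempty) (hB : B.Nonempty) (hC : C.Nonempty)
    (hdisj : Disjoint (A + B) C)
    (H : Finset G)
    (hH : H = Finset.univ.filter (fun x : G => Finset.image (fun a => a + x) (A + B) = A + B)) :
    (C.card : ℤ) ≤ (Fintype.card G : ℤ) - A.card - B.card + H.card := by
  classical
  obtain ⟨K, hK, hn⟩ := kneser_weak A B hA hB
  have h1 : Nat.card K ≤ H.card := by
    rw [Nat.card_eq_fintype_card, Fintype.card_subtype]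
    refine Finset.card_le_card ?_
    intro x hx
    have hx : x ∈ K := by simpa using hx
    rw [hH]
    refine Finset.mem_filter.2 ⟨Finset.mem_univ _, ?_⟩
    refine Finset.eq_of_subset_of_card_le ?_ ?_
    · intro y hy
      obtain ⟨z, hz, rfl⟩ := Finset.mem_image.1 hy
      exact hK z hz x hx
    · rw [Finset.card_image_of_injective _ (add_left_injective x)]
  have h2 : (A + B).card + C.card ≤ Fintype.card G := by
    rw [← Finset.card_union_of_disjoint hdisj]
    exact Finset.card_le_univ _
  omega
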